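/- arXiv:2507.19889 — 2 statements merged into one kernel-verified Lean document; each statement's English description precedes it below -/
import Mathlib

section
/- Under the IPW setup, the average length treatment effect is identified from the observed data distribution: ξ = ( E[(A/π(X)) cos Θ]² + E[(A/π(X)) sin Θ]² )^{1/2} − ( E[((1−A)/(1−π(X))) cos Θ]² + E[((1−A)/(1−π(X))) sin Θ]² )^{1/2}. -/
open MeasureTheory ProbabilityTheory Filter Topology

/-!
Write `m` for the σ-algebra of the covariates. A nonnegative weight `U` that is independent of `V`
given `m` satisfies `E[U V | m] = E[U | m] E[V | m]`, so dividing by `E[U | m]` before averaging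
gives `E[(U / E[U | m]) V] = E[V]`. For `U = A` the factor `A` replaces the observed `Θ` by `Θ^(1)`,
and for `U = 1 - A` it is replaced by `Θ^(0)`; take `V` to be its cosine and its sine.

The quotient `U / E[U | m]` need not be bounded. Its product with `V` is integrable because, for
nonnegative `f` and `m`-measurable `g`, the functions `g f` and `g E[f | m]` have the same `L¹`
norm, and here `g E[f | m] = E[|V| | m]`.
-/

open scoped ENNReal

section ConditionalExpectation

variable {Ω : Type*} {m mΩ : MeasurableSpace Ω} {μ : Measure Ω}

theorem trim_withDensity_condLExp (hm : m ≤ mΩ) [SigmaFinite (μ.trim hm)] (f : Ω → ℝ≥0∞) :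
    (μ.withDensity μ⁻[f|m]).trim hm = (μ.withDensity f).trim hm := by
  refine @Measure.ext _ m _ _ fun s hs ↦ ?_
  simp only [trim_measurableSet_eq hm hs, withDensity_apply _ (hm s hs),
    setLIntegral_condLExp hm μ f hs]

theorem lintegral_condLExp_mul (hm : m ≤ mΩ) [SigmaFinite (μ.trim hm)] {f g : Ω → ℝ≥0∞}
    (hf : AEMeasurable f μ) (hg : Measurable[m] g) :
    ∫⁻ ω, μ⁻[f|m] ω * g ω ∂μ = ∫⁻ ω, f ω * g ω ∂μ :=
  calc ∫⁻ ω, μ⁻[f|m] ω * g ω ∂μ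
      = ∫⁻ ω, g ω ∂μ.withDensity μ⁻[f|m] :=
        (lintegral_withDensity_eq_lintegral_mul _ (by fun_prop) (hg.mono hm le_rfl)).symm
    _ = ∫⁻ ω, g ω ∂μ.withDensity f := by
        rw [← lintegral_trim hm hg, trim_withDensity_condLExp, lintegral_trim hm hg]
    _ = ∫⁻ ω, f ω * g ω ∂μ :=
        lintegral_withDensity_eq_lintegral_mul₀ hf (hg.mono hm le_rfl).aemeasurable

theorem integrable_mul_condExp_iff (hm : m ≤ mΩ) [SigmaFinite (μ.trim hm)] {f g : Ω → ℝ}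
    (hf : Integrable f μ) (hf_nonneg : 0 ≤ᵐ[μ] f) (hg : StronglyMeasurable[m] g) :
    Integrable (g * μ[f | m]) μ ↔ Integrable (g * f) μ := by
  have hg' : AEStronglyMeasurable g μ := (hg.mono hm).aestronglyMeasurable
  have h_norm : ∫⁻ ω, ‖(g * μ[f | m]) ω‖ₑ ∂μ = ∫⁻ ω, ‖(g * f) ω‖ₑ ∂μ :=
    calc ∫⁻ ω, ‖(g * μ[f | m]) ω‖ₑ ∂μ
        = ∫⁻ ω, μ⁻[fun ω ↦ ‖f ω‖ₑ|m] ω * ‖g ω‖ₑ ∂μ := by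
          refine lintegral_congr_ae ?_
          filter_upwards [condLExp_enorm m hf hf_nonneg] with ω hω
          rw [hω, Pi.mul_apply, enorm_mul, mul_comm]
      _ = ∫⁻ ω, ‖f ω‖ₑ * ‖g ω‖ₑ ∂μ :=
          lintegral_condLExp_mul hm hf.1.enorm hg.enorm
      _ = ∫⁻ ω, ‖(g * f) ω‖ₑ ∂μ := by simp only [Pi.mul_apply, enorm_mul, mul_comm]
  simp only [Integrable, HasFiniteIntegral, h_norm, hg'.mul hf.1,
    hg'.mul integrable_condExp.aestronglyMeasurable, true_and]

end ConditionalExpectation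

section InverseWeighting

variable {Ω E : Type*} {m mΩ : MeasurableSpace Ω} [StandardBorelSpace Ω]
  [NormedAddCommGroup E] [NormedSpace ℝ E] [MeasurableSpace E] [BorelSpace E]
  {μ : Measure Ω} [IsFiniteMeasure μ] {hm : m ≤ mΩ} {U : Ω → ℝ} {V : Ω → E}

theorem condExp_smul_of_condIndepFun [CompleteSpace E] [SecondCountableTopology E]
    (hU : Measurable U) (hV : Measurable V) (hU_int : Integrable U μ)
    (hV_int : Integrable V μ) (hUV_int : Integrable (U • V) μ) (h_indep : CondIndepFun m hm U V μ) :
    μ[U • V | m] =ᵐ[μ] μ[U | m] • μ[V | m] := by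
  have h_kernel := ae_of_ae_trim hm
    ((condIndepFun_iff_map_prod_eq_prod_map_map hU hV).1 h_indep)
  filter_upwards [h_kernel, hU_int.condExpKernel_ae, hV_int.condExpKernel_ae,
    condExp_ae_eq_integral_condExpKernel hm hU_int,
    condExp_ae_eq_integral_condExpKernel hm hV_int,
    condExp_ae_eq_integral_condExpKernel hm hUV_int] with ω h_prod hUω hVω hU_eq hV_eq hUV_eq
  have h_indepω : IndepFun U V (condExpKernel μ m ω) := by
    rwa [indepFun_iff_map_prod_eq_prod_map_map hU.aemeasurable hV.aemeasurable,
      ← Kernel.map_apply _ (hU.prodMk hV), ← Kernel.map_apply _ hU, ← Kernel.map_apply _ hV,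
      ← Kernel.prod_apply]
  rw [Pi.smul_apply', hU_eq, hV_eq, hUV_eq]
  exact h_indepω.integral_smul_eq_smul_integral hUω.1 hVω.1

theorem integrable_inv_condExp_smul_of_condIndepFun (hU : Measurable U) (hV : Measurable V)
    (hU_int : Integrable U μ) (hV_int : Integrable V μ) (hUV_int : Integrable (U • V) μ)
    (hU_nonneg : 0 ≤ᵐ[μ] U) (hU_pos : ∀ᵐ ω ∂μ, 0 < μ[U | m] ω)
    (h_indep : CondIndepFun m hm U V μ) :
    Integrable ((μ[U | m])⁻¹ • U • V) μ := by
  have h_inv : StronglyMeasurable[m] (μ[U | m])⁻¹ :=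
    stronglyMeasurable_condExp.measurable.inv.stronglyMeasurable
  have h_norm : (fun ω ↦ ‖(U • V) ω‖) =ᵐ[μ] U • fun ω ↦ ‖V ω‖ := by
    filter_upwards [hU_nonneg] with ω hω
    simp only [Pi.smul_apply', norm_smul, Real.norm_of_nonneg hω, smul_eq_mul]
  have h_condExp : μ[fun ω ↦ ‖(U • V) ω‖ | m] =ᵐ[μ] μ[U | m] • μ[fun ω ↦ ‖V ω‖ | m] :=
    (condExp_congr_ae h_norm).trans <| condExp_smul_of_condIndepFun hU hV.norm hU_int hV_int.norm
      (hUV_int.norm.congr h_norm) (h_indep.comp measurable_id measurable_norm)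
  have h_int : Integrable ((μ[U | m])⁻¹ * μ[fun ω ↦ ‖(U • V) ω‖ | m]) μ := by
    refine (integrable_condExp (f := fun ω ↦ ‖V ω‖) (m := m)).congr ?_
    filter_upwards [h_condExp, hU_pos] with ω hω h_pos
    rw [Pi.mul_apply, hω, Pi.inv_apply, Pi.smul_apply', smul_eq_mul,
      inv_mul_cancel_left₀ h_pos.ne']
  have h_int_norm := (integrable_mul_condExp_iff hm hUV_int.norm
    (ae_of_all μ fun ω ↦ norm_nonneg _) h_inv).1 h_int
  refine h_int_norm.mono ((h_inv.mono hm).aestronglyMeasurable.smul hUV_int.1)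
    (ae_of_all μ fun ω ↦ ?_)
  simp only [Pi.smul_apply', Pi.mul_apply, norm_smul, norm_mul, norm_norm, le_refl]

variable [CompleteSpace E] [SecondCountableTopology E]

theorem integral_div_condExp_smul_of_condIndepFun (hU : Measurable U) (hV : Measurable V)
    (hU_int : Integrable U μ) (hV_int : Integrable V μ) (hUV_int : Integrable (U • V) μ)
    (hU_nonneg : 0 ≤ᵐ[μ] U) (hU_pos : ∀ᵐ ω ∂μ, 0 < μ[U | m] ω)
    (h_indep : CondIndepFun m hm U V μ) :
    ∫ ω, (U ω / μ[U | m] ω) • V ω ∂μ = ∫ ω, V ω ∂μ := by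
  have h_inv : AEStronglyMeasurable[m] (μ[U | m])⁻¹ μ :=
    stronglyMeasurable_condExp.measurable.inv.stronglyMeasurable.aestronglyMeasurable
  have h_pull_out := condExp_smul_of_aestronglyMeasurable_left h_inv
    (integrable_inv_condExp_smul_of_condIndepFun hU hV hU_int hV_int hUV_int hU_nonneg hU_pos
      h_indep) hUV_int
  have h_factor := condExp_smul_of_condIndepFun hU hV hU_int hV_int hUV_int h_indep
  calc ∫ ω, (U ω / μ[U | m] ω) • V ω ∂μ
      = ∫ ω, ((μ[U | m])⁻¹ • U • V) ω ∂μ := by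
        simp only [Pi.smul_apply', Pi.inv_apply, smul_smul, div_eq_inv_mul]
    _ = ∫ ω, μ[(μ[U | m])⁻¹ • U • V | m] ω ∂μ := (integral_condExp hm).symm
    _ = ∫ ω, μ[V | m] ω ∂μ := by
        refine integral_congr_ae ?_
        filter_upwards [h_pull_out, h_factor, hU_pos] with ω h_out h_fac h_pos
        rw [h_out, Pi.smul_apply', h_fac, Pi.smul_apply', Pi.inv_apply, inv_smul_smul₀ h_pos.ne']
    _ = ∫ ω, V ω ∂μ := integral_condExp hm

theorem integral_div_smul_comp_of_condIndepFun {β : Type*} [MeasurableSpace β] {e : Ω → ℝ}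
    {Y Z : Ω → β} {f : β → E} (hU : Measurable U) (hY : Measurable Y) (hf : Measurable f)
    (hU_int : Integrable U μ) (hfY_int : Integrable (f ∘ Y) μ)
    (hUfY_int : Integrable (U • (f ∘ Y)) μ) (hU_nonneg : 0 ≤ᵐ[μ] U) (he : μ[U | m] =ᵐ[μ] e)
    (he_pos : ∀ᵐ ω ∂μ, 0 < e ω) (h_indep : CondIndepFun m hm U Y μ)
    (hZ : ∀ᵐ ω ∂μ, U ω ≠ 0 → Z ω = Y ω) :
    ∫ ω, (U ω / e ω) • f (Z ω) ∂μ = ∫ ω, f (Y ω) ∂μ := by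
  have hU_pos : ∀ᵐ ω ∂μ, 0 < μ[U | m] ω := by
    filter_upwards [he, he_pos] with ω hω h_pos using hω ▸ h_pos
  refine Eq.trans (integral_congr_ae ?_) (integral_div_condExp_smul_of_condIndepFun hU
    (hf.comp hY) hU_int hfY_int hUfY_int hU_nonneg hU_pos (h_indep.comp measurable_id hf))
  filter_upwards [he, hZ] with ω hω hZω
  rcases eq_or_ne (U ω) 0 with h_zero | h_ne
  · simp only [h_zero, zero_div, zero_smul]
  · rw [hω, hZω h_ne]

end InverseWeighting

section ResultantLength

variable {Ω : Type*} {m mΩ : MeasurableSpace Ω}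

/-- The mean resultant length `ρ` of a random angle `Θ` in radians, i.e. the norm of the mean of
`(cos Θ, sin Θ)`. -/
noncomputable def meanResultantLength (μ : Measure Ω) (Θ : Ω → ℝ) : ℝ :=
  √((∫ ω, Real.cos (Θ ω) ∂μ) ^ 2 + (∫ ω, Real.sin (Θ ω) ∂μ) ^ 2)

/-- The norm of the mean of `w • (cos Θ, sin Θ)`. Inverse-probability weighting expresses a mean
resultant length in this form; the weights `w` are not normalized. -/
noncomputable def weightedResultantLength (μ : Measure Ω) (w Θ : Ω → ℝ) : ℝ :=
  √((∫ ω, w ω * Real.cos (Θ ω) ∂μ) ^ 2 + (∫ ω, w ω * Real.sin (Θ ω) ∂μ) ^ 2)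

variable [StandardBorelSpace Ω] {μ : Measure Ω} [IsFiniteMeasure μ] {hm : m ≤ mΩ}

theorem weightedResultantLength_div_of_condIndepFun {U e Y Z : Ω → ℝ} (hU : Measurable U)
    (hY : Measurable Y) (hU_int : Integrable U μ) (hU_nonneg : 0 ≤ᵐ[μ] U)
    (he : μ[U | m] =ᵐ[μ] e) (he_pos : ∀ᵐ ω ∂μ, 0 < e ω) (h_indep : CondIndepFun m hm U Y μ)
    (hZ : ∀ᵐ ω ∂μ, U ω ≠ 0 → Z ω = Y ω) :
    weightedResultantLength μ (fun ω ↦ U ω / e ω) Z = meanResultantLength μ Y := by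
  have h_ipw {f : ℝ → ℝ} (hf : Measurable f) (hf_le : ∀ x, |f x| ≤ 1) :
      ∫ ω, U ω / e ω * f (Z ω) ∂μ = ∫ ω, f (Y ω) ∂μ :=
    have hfY : AEStronglyMeasurable (f ∘ Y) μ := (hf.comp hY).aestronglyMeasurable
    have hfY_le : ∀ᵐ ω ∂μ, ‖(f ∘ Y) ω‖ ≤ 1 := ae_of_all μ fun ω ↦ hf_le (Y ω)
    integral_div_smul_comp_of_condIndepFun hU hY hf hU_int (.of_bound hfY 1 hfY_le)
      (hU_int.mul_bdd hfY hfY_le) hU_nonneg he he_pos h_indep hZ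
  rw [weightedResultantLength, meanResultantLength,
    h_ipw Real.measurable_cos Real.abs_cos_le_one, h_ipw Real.measurable_sin Real.abs_sin_le_one]

theorem alte_identified_general {A e Θ1 Θ0 Θ : Ω → ℝ} (hA : Measurable A)
    (hΘ1 : Measurable Θ1) (hΘ0 : Measurable Θ0) (hA01 : ∀ᵐ ω ∂μ, A ω = 0 ∨ A ω = 1)
    (he : μ[A | m] =ᵐ[μ] e) (he01 : ∀ᵐ ω ∂μ, 0 < e ω ∧ e ω < 1)
    (h_indep1 : CondIndepFun m hm A Θ1 μ) (h_indep0 : CondIndepFun m hm A Θ0 μ)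
    (hΘ : ∀ᵐ ω ∂μ, Θ ω = A ω * Θ1 ω + (1 - A ω) * Θ0 ω) :
    meanResultantLength μ Θ1 - meanResultantLength μ Θ0 =
      weightedResultantLength μ (fun ω ↦ A ω / e ω) Θ -
        weightedResultantLength μ (fun ω ↦ (1 - A ω) / (1 - e ω)) Θ := by
  have hA_int : Integrable A μ := .of_bound hA.aestronglyMeasurable 1 <| by
    filter_upwards [hA01] with ω hω
    rcases hω with h | h <;> simp [h]
  have h_compl : μ[fun ω ↦ 1 - A ω | m] =ᵐ[μ] fun ω ↦ 1 - e ω := by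
    have h_sub := condExp_sub (integrable_const (1 : ℝ)) hA_int m
    rw [condExp_const hm] at h_sub
    filter_upwards [h_sub, he] with ω h_subω heω
    exact h_subω.trans (by rw [Pi.sub_apply, heω])
  have h_treated := weightedResultantLength_div_of_condIndepFun (Z := Θ) hA hΘ1 hA_int
    (by filter_upwards [hA01] with ω hω; rcases hω with h | h <;> simp [h])
    he (he01.mono fun _ h ↦ h.1) h_indep1
    (by filter_upwards [hA01, hΘ] with ω hω hΘω; rcases hω with h | h <;> simp [h, hΘω])
  have h_control := weightedResultantLength_div_of_condIndepFun (Z := Θ) (hA.const_sub 1) hΘ0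
    ((integrable_const 1).sub hA_int)
    (by filter_upwards [hA01] with ω hω; rcases hω with h | h <;> simp [h])
    h_compl (he01.mono fun _ h ↦ sub_pos.2 h.2)
    (h_indep0.comp (measurable_id.const_sub 1) measurable_id)
    (by filter_upwards [hA01, hΘ] with ω hω hΘω; rcases hω with h | h <;> simp [h, hΘω])
  rw [h_treated, h_control]

end ResultantLength

/-- **Identification of the average length treatment effect (ALTE).** -/
theorem alte_identified
    {Ω : Type*} [MeasurableSpace Ω] [StandardBorelSpace Ω] [Nonempty Ω]
    (μ : Measure Ω) [IsProbabilityMeasure μ] {p : ℕ}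
    (A : Ω → ℝ) (X : Ω → (Fin p → ℝ)) (Θ1 Θ0 : Ω → ℝ)
    (hA : Measurable A) (hX : Measurable X) (hΘ1 : Measurable Θ1) (hΘ0 : Measurable Θ0)
    (hA01 : ∀ ω, A ω = 0 ∨ A ω = 1)
    (ps : (Fin p → ℝ) → ℝ) (hps : Measurable ps)
    (hps01 : ∀ x, 0 < ps x ∧ ps x < 1)
    (hcond : μ[A | MeasurableSpace.comap X inferInstance] =ᵐ[μ] fun ω => ps (X ω))
    (hSI : CondIndepFun (MeasurableSpace.comap X inferInstance) hX.comap_le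
      A (fun ω => (Θ1 ω, Θ0 ω)) μ)
    (Θ : Ω → ℝ) (hΘ : ∀ ω, Θ ω = A ω * Θ1 ω + (1 - A ω) * Θ0 ω)
    (α1 β1 α0 β0 : ℝ)
    (hα1 : α1 = ∫ ω, Real.cos (Θ1 ω) ∂μ) (hβ1 : β1 = ∫ ω, Real.sin (Θ1 ω) ∂μ)
    (hα0 : α0 = ∫ ω, Real.cos (Θ0 ω) ∂μ) (hβ0 : β0 = ∫ ω, Real.sin (Θ0 ω) ∂μ)
    (ξ : ℝ) (hξ : ξ = Real.sqrt (α1 ^ 2 + β1 ^ 2) - Real.sqrt (α0 ^ 2 + β0 ^ 2)) :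
    ξ = Real.sqrt ((∫ ω, (A ω / ps (X ω)) * Real.cos (Θ ω) ∂μ) ^ 2
          + (∫ ω, (A ω / ps (X ω)) * Real.sin (Θ ω) ∂μ) ^ 2)
      - Real.sqrt ((∫ ω, ((1 - A ω) / (1 - ps (X ω))) * Real.cos (Θ ω) ∂μ) ^ 2
          + (∫ ω, ((1 - A ω) / (1 - ps (X ω))) * Real.sin (Θ ω) ∂μ) ^ 2) := by
  subst hξ hα1 hβ1 hα0 hβ0
  exact alte_identified_general hA hΘ1 hΘ0 (ae_of_all μ hA01) hcond
    (ae_of_all μ fun ω ↦ hps01 (X ω)) (hSI.comp measurable_id measurable_fst)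
    (hSI.comp measurable_id measurable_snd) (ae_of_all μ hΘ)
end

section
/- Under the IPW setup, the cross-arm products of HT estimating functions have expectation equal to minus the product of the corresponding moments: E[ ( (A/π(X)) cos Θ − α^(1) ) · ( ((1−A)/(1−π(X))) cos Θ − α^(0) ) ] = −α^(1) α^(0). -/
open MeasureTheory ProbabilityTheory Filter Topology

/-!
Weighting an arm by its inverse propensity does not change the conditional mean of the potential
outcome given the covariates, so each weighted arm has the mean of its potential outcome. No unit is
in both arms, so the two weighted arms have product zero, and their covariance is minus the product
of their means.
-/

section CondExp

variable {Ω E : Type*} {m mΩ : MeasurableSpace Ω} {μ : Measure Ω} [NormedAddCommGroup E]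

lemma lintegral_mul_condLExp (hm : m ≤ mΩ) [SigmaFinite (μ.trim hm)] {g f : Ω → ENNReal}
    (hg : Measurable[m] g) (hf : AEMeasurable f μ) :
    ∫⁻ ω, g ω * μ⁻[f | m] ω ∂μ = ∫⁻ ω, g ω * f ω ∂μ := by
  have htrim : (μ.withDensity μ⁻[f | m]).trim hm = (μ.withDensity f).trim hm := by
    refine @Measure.ext _ m _ _ fun s hs => ?_
    rw [trim_measurableSet_eq hm hs, trim_measurableSet_eq hm hs,
      withDensity_apply _ (hm s hs), withDensity_apply _ (hm s hs), setLIntegral_condLExp hm μ f hs]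
  have hgm : AEMeasurable g μ := (hg.mono hm le_rfl).aemeasurable
  calc ∫⁻ ω, g ω * μ⁻[f | m] ω ∂μ
      = ∫⁻ ω, g ω ∂(μ.withDensity μ⁻[f | m]) := by
        rw [lintegral_withDensity_eq_lintegral_mul₀ (measurable_condLExp' m μ f).aemeasurable hgm]
        simp only [Pi.mul_apply, mul_comm]
    _ = ∫⁻ ω, g ω ∂(μ.withDensity f) := by
        rw [← lintegral_trim hm hg, htrim, lintegral_trim hm hg]
    _ = ∫⁻ ω, g ω * f ω ∂μ := by
        rw [lintegral_withDensity_eq_lintegral_mul₀ hf hgm]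
        simp only [Pi.mul_apply, mul_comm]

lemma integrable_smul_of_integrable_mul_condExp_norm [NormedSpace ℝ E] (hm : m ≤ mΩ)
    [SigmaFinite (μ.trim hm)] {w : Ω → ℝ} {f : Ω → E} (hw : AEStronglyMeasurable[m] w μ)
    (hf : Integrable f μ) (hwf : Integrable (fun ω => w ω * μ[fun ω => ‖f ω‖ | m] ω) μ) :
    Integrable (fun ω => w ω • f ω) μ := by
  have hwm := hw.mono hm
  obtain ⟨v, hv, hwv⟩ := hw
  have hcond : μ⁻[fun ω => ‖f ω‖ₑ | m] =ᵐ[μ] fun ω => ‖μ[fun ω => ‖f ω‖ | m] ω‖ₑ := by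
    have hnonneg : 0 ≤ᵐ[μ] fun ω => ‖f ω‖ := ae_of_all _ fun ω => norm_nonneg _
    filter_upwards [condLExp_ofReal m hf.norm hnonneg, condExp_nonneg (m := m) hnonneg] with ω h h0
    simpa only [ofReal_norm, ← Real.enorm_of_nonneg h0] using h
  refine ⟨hwm.smul hf.aestronglyMeasurable, ?_⟩
  calc ∫⁻ ω, ‖w ω • f ω‖ₑ ∂μ
      = ∫⁻ ω, ‖v ω‖ₑ * ‖f ω‖ₑ ∂μ := lintegral_congr_ae <| by
        filter_upwards [hwv] with ω h
        rw [enorm_smul, h]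
    _ = ∫⁻ ω, ‖v ω‖ₑ * μ⁻[fun ω => ‖f ω‖ₑ | m] ω ∂μ :=
        (lintegral_mul_condLExp hm hv.enorm hf.aestronglyMeasurable.enorm).symm
    _ = ∫⁻ ω, ‖w ω * μ[fun ω => ‖f ω‖ | m] ω‖ₑ ∂μ := lintegral_congr_ae <| by
        filter_upwards [hwv, hcond] with ω h hc
        rw [enorm_mul, h, hc]
    _ < ⊤ := hwf.hasFiniteIntegral

lemma condExp_const_sub [NormedSpace ℝ E] [CompleteSpace E] (hm : m ≤ mΩ) [IsFiniteMeasure μ]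
    (c : E) {f : Ω → E} (hf : Integrable f μ) :
    μ[fun ω => c - f ω | m] =ᵐ[μ] fun ω => c - μ[f | m] ω := by
  simpa only [condExp_const hm] using! condExp_sub (integrable_const c) hf m

end CondExp

section CondIndepFun

variable {Ω : Type*} {m mΩ : MeasurableSpace Ω} [StandardBorelSpace Ω] {hm : m ≤ mΩ}
  {μ : Measure Ω} [IsFiniteMeasure μ]

lemma ae_indepFun_condExpKernel_of_condIndepFun {β γ : Type*} [MeasurableSpace β]
    [MeasurableSpace γ] [MeasurableSpace.CountableOrCountablyGenerated Ω (β × γ)]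
    {f : Ω → β} {g : Ω → γ} (hf : Measurable f) (hg : Measurable g)
    (h : CondIndepFun m hm f g μ) :
    ∀ᵐ ω ∂μ, IndepFun f g (condExpKernel μ m ω) := by
  filter_upwards [ae_of_ae_trim hm ((condIndepFun_iff_map_prod_eq_prod_map_map hf hg).1 h)]
    with ω hω
  rw [Kernel.map_apply _ (hf.prodMk hg), Kernel.prod_apply, Kernel.map_apply _ hf,
    Kernel.map_apply _ hg] at hω
  exact (indepFun_iff_map_prod_eq_prod_map_map hf.aemeasurable hg.aemeasurable).2 hω

variable {E : Type*} [NormedAddCommGroup E] [NormedSpace ℝ E] [CompleteSpace E]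
  [MeasurableSpace E] [BorelSpace E] [SecondCountableTopology E]

lemma condExp_smul_of_condIndepFun_s12 {f : Ω → ℝ} {g : Ω → E} (hf : Measurable f) (hg : Measurable g)
    (hfi : Integrable f μ) (hgi : Integrable g μ) (hfg : Integrable (fun ω => f ω • g ω) μ)
    (h : CondIndepFun m hm f g μ) :
    μ[fun ω => f ω • g ω | m] =ᵐ[μ] fun ω => μ[f | m] ω • μ[g | m] ω := by
  filter_upwards [ae_indepFun_condExpKernel_of_condIndepFun hf hg h,
    condExp_ae_eq_integral_condExpKernel hm hfi, condExp_ae_eq_integral_condExpKernel hm hgi,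
    condExp_ae_eq_integral_condExpKernel hm hfg] with ω hindep hfω hgω hfgω
  rw [hfω, hgω, hfgω]
  exact hindep.integral_fun_smul_eq_smul_integral hf.aestronglyMeasurable hg.aestronglyMeasurable

end CondIndepFun

section InverseProbabilityWeighting

/-- The outcome `Z` weighted by the inverse propensity `e` of the arm with indicator `A`, as in the
Horvitz–Thompson estimator. Where `e` vanishes the weight is `0`. -/
noncomputable def ipw {Ω E : Type*} [SMul ℝ E] (A e : Ω → ℝ) (Z : Ω → E) : Ω → E :=
  fun ω => (A ω / e ω) • Z ω

lemma ipw_eq_inv_smul {Ω E : Type*} [MulAction ℝ E] (A e : Ω → ℝ) (Z : Ω → E) :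
    ipw A e Z = e⁻¹ • fun ω => A ω • Z ω := by
  ext ω
  simp only [ipw, Pi.smul_apply', Pi.inv_apply, smul_smul, inv_mul_eq_div]

variable {Ω E : Type*} {m mΩ : MeasurableSpace Ω} {μ : Measure Ω} {A e : Ω → ℝ} {Z Z' : Ω → E}

lemma ipw_ae_eq_of_ae_eq_of_ne_zero [Zero E] [SMulWithZero ℝ E]
    (hZ' : ∀ᵐ ω ∂μ, A ω ≠ 0 → Z' ω = Z ω) : ipw A e Z' =ᵐ[μ] ipw A e Z := by
  filter_upwards [hZ'] with ω hω
  obtain hA | hA := eq_or_ne (A ω) 0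
  · simp only [ipw, hA, zero_div, zero_smul]
  · simp only [ipw, hω hA]

variable [StandardBorelSpace Ω] {hm : m ≤ mΩ} [IsFiniteMeasure μ] [NormedAddCommGroup E]
  [NormedSpace ℝ E] [MeasurableSpace E] [BorelSpace E]

lemma integrable_ipw (hA : Measurable A) (hZ : Measurable Z) (hA0 : 0 ≤ᵐ[μ] A)
    (hAi : Integrable A μ) (hZi : Integrable Z μ) (hAZ : Integrable (fun ω => A ω • Z ω) μ)
    (he : μ[A | m] =ᵐ[μ] e) (he0 : ∀ᵐ ω ∂μ, e ω ≠ 0) (h : CondIndepFun m hm A Z μ) :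
    Integrable (ipw A e Z) μ := by
  have hem : AEStronglyMeasurable[m] e μ := stronglyMeasurable_condExp.aestronglyMeasurable.congr he
  have hnorm : (fun ω => ‖A ω • Z ω‖) =ᵐ[μ] fun ω => A ω • ‖Z ω‖ := by
    filter_upwards [hA0] with ω hω
    rw [norm_smul, Real.norm_of_nonneg hω, smul_eq_mul]
  have hfactor : μ[fun ω => ‖A ω • Z ω‖ | m] =ᵐ[μ]
      fun ω => μ[A | m] ω • μ[fun ω => ‖Z ω‖ | m] ω :=
    (condExp_congr_ae hnorm).trans <| condExp_smul_of_condIndepFun_s12 hA hZ.norm hAi hZi.norm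
      (hAZ.norm.congr hnorm) (h.comp measurable_id measurable_norm)
  have hcancel : Integrable (fun ω => (e ω)⁻¹ * μ[fun ω => ‖A ω • Z ω‖ | m] ω) μ := by
    refine (integrable_condExp (m := m) (f := fun ω => ‖Z ω‖)).congr ?_
    filter_upwards [hfactor, he, he0] with ω hfω heω he0ω
    rw [hfω, heω, smul_eq_mul, inv_mul_cancel_left₀ he0ω]
  rw [ipw_eq_inv_smul]
  exact integrable_smul_of_integrable_mul_condExp_norm hm hem.inv₀ hAZ hcancel

variable [CompleteSpace E] [SecondCountableTopology E]

lemma condExp_ipw (hA : Measurable A) (hZ : Measurable Z) (hA0 : 0 ≤ᵐ[μ] A)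
    (hAi : Integrable A μ) (hZi : Integrable Z μ) (hAZ : Integrable (fun ω => A ω • Z ω) μ)
    (he : μ[A | m] =ᵐ[μ] e) (he0 : ∀ᵐ ω ∂μ, e ω ≠ 0) (h : CondIndepFun m hm A Z μ) :
    μ[ipw A e Z | m] =ᵐ[μ] μ[Z | m] := by
  have hem : AEStronglyMeasurable[m] e μ := stronglyMeasurable_condExp.aestronglyMeasurable.congr he
  have hint := integrable_ipw hA hZ hA0 hAi hZi hAZ he he0 h
  rw [ipw_eq_inv_smul] at hint ⊢
  filter_upwards [condExp_smul_of_aestronglyMeasurable_left hem.inv₀ hint hAZ,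
    condExp_smul_of_condIndepFun_s12 hA hZ hAi hZi hAZ h, he, he0] with ω hpull hprod heω he0ω
  rw [hpull, Pi.smul_apply', Pi.inv_apply, hprod, heω, inv_smul_smul₀ he0ω]

lemma integral_ipw (hA : Measurable A) (hZ : Measurable Z) (hA0 : 0 ≤ᵐ[μ] A)
    (hAi : Integrable A μ) (hZi : Integrable Z μ) (hAZ : Integrable (fun ω => A ω • Z ω) μ)
    (he : μ[A | m] =ᵐ[μ] e) (he0 : ∀ᵐ ω ∂μ, e ω ≠ 0) (h : CondIndepFun m hm A Z μ) :
    ∫ ω, ipw A e Z ω ∂μ = ∫ ω, Z ω ∂μ := by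
  rw [← integral_condExp hm, integral_congr_ae (condExp_ipw hA hZ hA0 hAi hZi hAZ he he0 h),
    integral_condExp hm]

lemma integrable_ipw_and_integral_ipw_of_consistent (hA : Measurable A) (hZ : Measurable Z)
    (hA01 : ∀ᵐ ω ∂μ, A ω ∈ Set.Icc 0 1) (hZi : Integrable Z μ) (he : μ[A | m] =ᵐ[μ] e)
    (he0 : ∀ᵐ ω ∂μ, e ω ≠ 0) (h : CondIndepFun m hm A Z μ)
    (hZ' : ∀ᵐ ω ∂μ, A ω ≠ 0 → Z' ω = Z ω) :
    Integrable (ipw A e Z') μ ∧ ∫ ω, ipw A e Z' ω ∂μ = ∫ ω, Z ω ∂μ := by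
  have hA0 : 0 ≤ᵐ[μ] A := hA01.mono fun ω hω => hω.1
  have hAi : Integrable A μ := .of_mem_Icc 0 1 hA.aemeasurable hA01
  have hAZ : Integrable (fun ω => A ω • Z ω) μ :=
    hZi.bdd_smul 1 hA.aestronglyMeasurable <| hA01.mono fun ω hω =>
      (Real.norm_of_nonneg hω.1).trans_le hω.2
  have hZZ' : ipw A e Z' =ᵐ[μ] ipw A e Z := ipw_ae_eq_of_ae_eq_of_ne_zero hZ'
  exact ⟨(integrable_ipw hA hZ hA0 hAi hZi hAZ he he0 h).congr hZZ'.symm,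
    (integral_congr_ae hZZ').trans (integral_ipw hA hZ hA0 hAi hZi hAZ he he0 h)⟩

end InverseProbabilityWeighting

lemma covariance_eq_neg_mul_of_mul_ae_eq_zero {Ω : Type*} [MeasurableSpace Ω] {μ : Measure Ω}
    [IsProbabilityMeasure μ] {U V : Ω → ℝ} (hU : Integrable U μ) (hV : Integrable V μ)
    (hUV : ∀ᵐ ω ∂μ, U ω * V ω = 0) :
    cov[U, V; μ] = -(μ[U] * μ[V]) := by
  have hexpand : (fun ω => (U ω - μ[U]) * (V ω - μ[V])) =ᵐ[μ]
      fun ω => μ[U] * μ[V] - U ω * μ[V] - μ[U] * V ω := by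
    filter_upwards [hUV] with ω hω
    linear_combination hω
  have hlinear : Integrable (fun ω => μ[U] * μ[V] - U ω * μ[V]) μ :=
    (integrable_const _).sub (hU.mul_const _)
  rw [covariance, integral_congr_ae hexpand, integral_sub hlinear (hV.const_mul _),
    integral_sub (integrable_const _) (hU.mul_const _), integral_const, probReal_univ, one_smul,
    integral_mul_const, integral_const_mul]
  ring

theorem ht_cross_arm_cos_cos_general {Ω 𝓨 : Type*} {m mΩ : MeasurableSpace Ω}
    [StandardBorelSpace Ω] {hm : m ≤ mΩ} {μ : Measure Ω} [IsProbabilityMeasure μ]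
    {A e : Ω → ℝ} {Y1 Y0 Y : Ω → 𝓨} {f g : 𝓨 → ℝ}
    (hA : Measurable A) (hA01 : ∀ᵐ ω ∂μ, A ω = 0 ∨ A ω = 1)
    (he : μ[A | m] =ᵐ[μ] e) (he01 : ∀ᵐ ω ∂μ, 0 < e ω ∧ e ω < 1)
    (hf : Measurable fun ω => f (Y1 ω)) (hg : Measurable fun ω => g (Y0 ω))
    (hfi : Integrable (fun ω => f (Y1 ω)) μ) (hgi : Integrable (fun ω => g (Y0 ω)) μ)
    (h1 : CondIndepFun m hm A (fun ω => f (Y1 ω)) μ)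
    (h0 : CondIndepFun m hm A (fun ω => g (Y0 ω)) μ)
    (hY1 : ∀ᵐ ω ∂μ, A ω = 1 → Y ω = Y1 ω) (hY0 : ∀ᵐ ω ∂μ, A ω = 0 → Y ω = Y0 ω) :
    ∫ ω, (A ω / e ω * f (Y ω) - ∫ ω', f (Y1 ω') ∂μ)
        * ((1 - A ω) / (1 - e ω) * g (Y ω) - ∫ ω', g (Y0 ω') ∂μ) ∂μ
      = -((∫ ω, f (Y1 ω) ∂μ) * ∫ ω, g (Y0 ω) ∂μ) := by
  have hAIcc : ∀ᵐ ω ∂μ, A ω ∈ Set.Icc 0 1 := by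
    filter_upwards [hA01] with ω hω
    rcases hω with hω | hω <;> simp [hω]
  have hcontrol : μ[fun ω => 1 - A ω | m] =ᵐ[μ] fun ω => 1 - e ω := by
    filter_upwards [condExp_const_sub hm 1 (.of_mem_Icc 0 1 hA.aemeasurable hAIcc), he]
      with ω hω heω
    rw [hω, heω]
  obtain ⟨hU, hEU⟩ := integrable_ipw_and_integral_ipw_of_consistent (Z' := fun ω => f (Y ω))
    hA hf hAIcc hfi he (he01.mono fun ω hω => hω.1.ne') h1 <| by
      filter_upwards [hA01, hY1] with ω hω hY hAω
      rw [hY (hω.resolve_left hAω)]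
  obtain ⟨hV, hEV⟩ := integrable_ipw_and_integral_ipw_of_consistent (Z' := fun ω => g (Y ω))
    (hA.const_sub 1) hg (hAIcc.mono fun ω => Set.Icc.mem_iff_one_sub_mem.1) hgi hcontrol
    (he01.mono fun ω hω => (sub_pos.2 hω.2).ne')
    (h0.comp (measurable_id.const_sub 1) measurable_id) <| by
      filter_upwards [hA01, hY0] with ω hω hY hAω
      rw [hY (hω.resolve_right (sub_ne_zero.1 hAω).symm)]
  have hUV : ∀ᵐ ω ∂μ, ipw A e (fun ω => f (Y ω)) ω
      * ipw (fun ω => 1 - A ω) (fun ω => 1 - e ω) (fun ω => g (Y ω)) ω = 0 := by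
    filter_upwards [hA01] with ω hω
    rcases hω with hω | hω <;> simp [ipw, hω]
  have hcov := covariance_eq_neg_mul_of_mul_ae_eq_zero hU hV hUV
  rwa [covariance, hEU, hEV] at hcov

/-- **Cross-arm product of HT cosine estimating functions.** -/
theorem ht_cross_arm_cos_cos
    {Ω : Type*} [MeasurableSpace Ω] [StandardBorelSpace Ω] [Nonempty Ω]
    (μ : Measure Ω) [IsProbabilityMeasure μ] {p : ℕ}
    (A : Ω → ℝ) (X : Ω → (Fin p → ℝ)) (Θ1 Θ0 : Ω → ℝ)
    (hA : Measurable A) (hX : Measurable X) (hΘ1 : Measurable Θ1) (hΘ0 : Measurable Θ0)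
    (hA01 : ∀ ω, A ω = 0 ∨ A ω = 1)
    (ps : (Fin p → ℝ) → ℝ) (hps : Measurable ps)
    (hps01 : ∀ x, 0 < ps x ∧ ps x < 1)
    (hcond : μ[A | MeasurableSpace.comap X inferInstance] =ᵐ[μ] fun ω => ps (X ω))
    (hSI : CondIndepFun (MeasurableSpace.comap X inferInstance) hX.comap_le
      A (fun ω => (Θ1 ω, Θ0 ω)) μ)
    (Θ : Ω → ℝ) (hΘ : ∀ ω, Θ ω = A ω * Θ1 ω + (1 - A ω) * Θ0 ω)
    (hw1 : Integrable (fun ω => A ω / (ps (X ω)) ^ 2) μ)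
    (hw0 : Integrable (fun ω => (1 - A ω) / (1 - ps (X ω)) ^ 2) μ)
    (α1 α0 : ℝ)
    (hα1 : α1 = ∫ ω, Real.cos (Θ1 ω) ∂μ) (hα0 : α0 = ∫ ω, Real.cos (Θ0 ω) ∂μ) :
    ∫ ω, ((A ω / ps (X ω)) * Real.cos (Θ ω) - α1)
        * (((1 - A ω) / (1 - ps (X ω))) * Real.cos (Θ ω) - α0) ∂μ
      = -(α1 * α0) := by
  subst hα1 hα0
  exact ht_cross_arm_cos_cos_general (f := Real.cos) (g := Real.cos) hA (ae_of_all _ hA01) hcond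
    (ae_of_all _ fun ω => hps01 (X ω)) hΘ1.cos hΘ0.cos
    (.of_bound hΘ1.cos.aestronglyMeasurable 1 (ae_of_all _ fun _ => Real.abs_cos_le_one _))
    (.of_bound hΘ0.cos.aestronglyMeasurable 1 (ae_of_all _ fun _ => Real.abs_cos_le_one _))
    (hSI.comp measurable_id (Real.measurable_cos.comp measurable_fst))
    (hSI.comp measurable_id (Real.measurable_cos.comp measurable_snd))
    (ae_of_all _ fun ω h => by simp [hΘ, h]) (ae_of_all _ fun ω h => by simp [hΘ, h])
end
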